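/- The k-linear map ρ^ss_O : T_or → T_or ⊗ T_or defined on an oriented tree T by ρ^ss_O(T) = Σ_{e ∈ E(T)} (T_e^1 ⊗ T_e^2 − T_e^2 ⊗ T_e^1) is a Lie cobracket on T_or. -/

import Mathlib

/-!
Statement 2: the map `ρ^ss_O(T) = Σ_{e ∈ E(T)} (T_e^1 ⊗ T_e^2 − T_e^2 ⊗ T_e^1)` is a Lie
cobracket on the free `k`-module `T_or` with basis the isomorphism classes of oriented
trees.  Here `T_e^2` is the component of `T ∖ {e}` that `e` points to and `T_e^1` the
component that `e` points away from.
-/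

open TensorProduct

noncomputable section

section LieCoalg

variable (k : Type*) [CommRing k] (g : Type*) [AddCommGroup g] [Module k g]

/-- `τ_{(12)}` on `g ⊗ g`. -/
def tau2 : g ⊗[k] g →ₗ[k] g ⊗[k] g := (TensorProduct.comm k g g).toLinearMap

/-- `τ_{(132)}` on the triple tensor product `g ⊗ (g ⊗ g)`: `x⊗y⊗z ↦ y⊗z⊗x`. -/
def tau132 : g ⊗[k] (g ⊗[k] g) →ₗ[k] g ⊗[k] (g ⊗[k] g) :=
  (TensorProduct.assoc k g g g).toLinearMap ∘ₗ
    (TensorProduct.comm k g (g ⊗[k] g)).toLinearMap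

/-- `τ_{(123)}` on the triple tensor product: `x⊗y⊗z ↦ z⊗x⊗y`. -/
def tau123 : g ⊗[k] (g ⊗[k] g) →ₗ[k] g ⊗[k] (g ⊗[k] g) :=
  tau132 k g ∘ₗ tau132 k g

variable {k g}

/-- `(δ ⊗ Id) ∘ δ : g → g ⊗ g ⊗ g` (triple tensor product associated as `g ⊗ (g ⊗ g)`). -/
def leftIter (δ : g →ₗ[k] g ⊗[k] g) : g →ₗ[k] g ⊗[k] (g ⊗[k] g) :=
  ((TensorProduct.assoc k g g g).toLinearMap ∘ₗ LinearMap.rTensor g δ) ∘ₗ δ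

/-- `δ : g → g ⊗ g` is a Lie cobracket if `τ_{(12)} ∘ δ = −δ` and
`(Id + τ_{(123)} + τ_{(132)}) ∘ (δ ⊗ Id) ∘ δ = 0` (co-Jacobi identity). -/
def IsLieCobracket (δ : g →ₗ[k] g ⊗[k] g) : Prop :=
  (tau2 k g) ∘ₗ δ = -δ ∧
  (LinearMap.id + tau123 k g + tau132 k g) ∘ₗ leftIter δ = 0

end LieCoalg

/-- The sum of a list of elements of an additive commutative monoid. -/
def lsum {M : Type*} [AddCommMonoid M] (l : List M) : M := l.foldr (· + ·) 0

/-- Planar rooted representations of oriented trees: each child carries a `Bool`, which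
is `true` exactly when the corresponding edge is oriented from the parent to the child.
The auxiliary root and planar data are forgotten upon passing to `OTreeIso` below. -/
inductive OTree : Type
  | node : List (Bool × OTree) → OTree

/-- Rooted isomorphism (permuting children, preserving edge orientations). -/
inductive OTree.EquivP : OTree → OTree → Prop
  | node {l l₂ l' : List (Bool × OTree)} :
      l.map Prod.fst = l₂.map Prod.fst →
      List.Forall₂ OTree.EquivP (l.map Prod.snd) (l₂.map Prod.snd) → l₂.Perm l' →
      OTree.EquivP (.node l) (.node l')

/-- Generating relation for isomorphism of the underlying (unrooted) oriented trees:
rooted isomorphisms together with moving the root along an edge.  Two planar rooted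
representations represent the same oriented tree iff they are related by the equivalence
closure of this relation. -/
inductive OTree.Rel : OTree → OTree → Prop
  | perm {t t'} : OTree.EquivP t t' → OTree.Rel t t'
  | reroot {b : Bool} {ls ts : List (Bool × OTree)} :
      OTree.Rel (.node ((b, .node ls) :: ts)) (.node (ls ++ [(!b, .node ts)]))

/-- Isomorphism classes of oriented trees. -/
def OTreeIso : Type := Quot OTree.Rel

mutual
/-- All one-edge cuts of (a rooted representation of) an oriented tree: for each edge
`e`, the triple `(b, A, B)` where `b` records the orientation of `e` (`true` iff `e`
points away from the root-side component), `A` is the component of `T ∖ {e}` away from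
the root and `B` is the component containing the root. -/
def OTree.cuts : OTree → List (Bool × OTree × OTree)
  | .node l => (OTree.cutsL l).map (fun p => (p.1, p.2.1, .node p.2.2))
/-- Auxiliary to `OTree.cuts`. -/
def OTree.cutsL : List (Bool × OTree) → List (Bool × OTree × List (Bool × OTree))
  | [] => []
  | (b, t) :: ts =>
      ((b, t, ts) :: (OTree.cuts t).map (fun p => (p.1, p.2.1, (b, p.2.2) :: ts)))
        ++ (OTree.cutsL ts).map (fun p => (p.1, p.2.1, (b, t) :: p.2.2))
end

variable (k : Type*) [CommRing k]

/-- `T_or`: the free `k`-module with basis the isomorphism classes of oriented trees. -/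
abbrev Tor := OTreeIso →₀ k

/-- The basis vector of an oriented tree. -/
def otv (t : OTree) : Tor k := Finsupp.single (Quot.mk OTree.Rel t) (1 : k)

/-- The cobracket `ρ^ss_O(T) = Σ_{e ∈ E(T)} (T_e^1 ⊗ T_e^2 − T_e^2 ⊗ T_e^1)`, where
`T_e^2` is the component of `T ∖ {e}` that `e` points to, and `T_e^1` is the component
that `e` points away from (defined via a representative of the isomorphism class; the
result does not depend on this choice). -/
def rhoO : Tor k →ₗ[k] Tor k ⊗[k] Tor k :=
  Finsupp.lift (Tor k ⊗[k] Tor k) k OTreeIso fun q =>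
    lsum ((OTree.cuts q.out).map fun p =>
      let T1 : OTree := if p.1 then p.2.2 else p.2.1
      let T2 : OTree := if p.1 then p.2.1 else p.2.2
      otv k T1 ⊗ₜ[k] otv k T2 - otv k T2 ⊗ₜ[k] otv k T1)

namespace OTree

/-- The sum of `F` over a list of cuts. -/
def sumCuts {α M : Type*} [AddCommMonoid M] (L : List (Bool × OTree × α))
    (F : Bool → OTree → α → M) : M :=
  (L.map fun p => F p.1 p.2.1 p.2.2).sum

section sumCuts

variable {α β M N : Type*}

@[simp]
theorem sumCuts_nil [AddCommMonoid M] (F : Bool → OTree → α → M) : sumCuts [] F = 0 := rfl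

theorem sumCuts_map [AddCommMonoid M] (L : List (Bool × OTree × α)) (g : α → β)
    (F : Bool → OTree → β → M) :
    sumCuts (L.map fun p => (p.1, p.2.1, g p.2.2)) F = sumCuts L fun b A B => F b A (g B) := by
  simp [sumCuts, Function.comp_def]

theorem sumCuts_add [AddCommMonoid M] (L : List (Bool × OTree × α))
    (F G : Bool → OTree → α → M) :
    (sumCuts L fun b A B => F b A B + G b A B) = sumCuts L F + sumCuts L G := by
  simp [sumCuts, List.sum_map_add]

theorem map_sumCuts [AddCommMonoid M] [AddCommMonoid N] {H : Type*} [FunLike H M N]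
    [AddMonoidHomClass H M N] (φ : H) (L : List (Bool × OTree × α))
    (F : Bool → OTree → α → M) :
    φ (sumCuts L F) = sumCuts L fun b A B => φ (F b A B) := by
  simp [sumCuts, map_list_sum, Function.comp_def]

theorem sumCuts_sub [AddCommGroup M] (L : List (Bool × OTree × α))
    (F G : Bool → OTree → α → M) :
    (sumCuts L fun b A B => F b A B - G b A B) = sumCuts L F - sumCuts L G := by
  rw [eq_sub_iff_add_eq, ← sumCuts_add]
  simp

theorem sumCuts_comm [AddCommMonoid M] (L : List (Bool × OTree × α))
    (L' : List (Bool × OTree × β)) (F : Bool → OTree → α → Bool → OTree → β → M) :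
    (sumCuts L fun b A B => sumCuts L' fun c C D => F b A B c C D) =
      sumCuts L' fun c C D => sumCuts L fun b A B => F b A B c C D := by
  induction L with
  | nil => simp [sumCuts]
  | cons p L ih =>
    simp only [sumCuts, List.map_cons, List.sum_cons] at ih ⊢
    rw [ih, ← List.sum_map_add]

theorem sumCuts_cuts_node [AddCommMonoid M] (l : List (Bool × OTree))
    (F : Bool → OTree → OTree → M) :
    sumCuts (cuts (.node l)) F = sumCuts (cutsL l) fun b A B => F b A (.node B) := by
  rw [cuts, sumCuts_map]

@[simp]
theorem sumCuts_cutsL_nil [AddCommMonoid M] (F : Bool → OTree → List (Bool × OTree) → M) :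
    sumCuts (cutsL []) F = 0 := by
  rw [cutsL, sumCuts_nil]

theorem sumCuts_cutsL_cons [AddCommMonoid M] (b : Bool) (t : OTree) (ts : List (Bool × OTree))
    (F : Bool → OTree → List (Bool × OTree) → M) :
    sumCuts (cutsL ((b, t) :: ts)) F =
      F b t ts + (sumCuts (cuts t) fun c A B => F c A ((b, B) :: ts)) +
        sumCuts (cutsL ts) fun c A B => F c A ((b, t) :: B) := by
  rw [← sumCuts_map (cuts t) (fun B => (b, B) :: ts), ← sumCuts_map (cutsL ts)]
  simp only [sumCuts, cutsL, List.map_append, List.sum_append, List.map_cons, List.sum_cons]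

theorem sumCuts_cutsL_append [AddCommMonoid M] (l l' : List (Bool × OTree))
    (F : Bool → OTree → List (Bool × OTree) → M) :
    sumCuts (cutsL (l ++ l')) F =
      (sumCuts (cutsL l) fun c A B => F c A (B ++ l')) +
        sumCuts (cutsL l') fun c A B => F c A (l ++ B) := by
  induction l generalizing F with
  | nil => simp
  | cons p l ih =>
    obtain ⟨b, t⟩ := p
    simp only [List.cons_append, sumCuts_cutsL_cons, ih, add_assoc]

end sumCuts

/-- Simultaneous induction on trees and on lists of children. -/
theorem induction_forest {P : OTree → Prop} {Q : List (Bool × OTree) → Prop}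
    (node : ∀ l, Q l → P (.node l)) (nil : Q [])
    (cons : ∀ b t ts, P t → Q ts → Q ((b, t) :: ts)) : (∀ t, P t) ∧ ∀ l, Q l := by
  have h : ∀ t, P t := fun t =>
    OTree.rec (motive_1 := P) (motive_2 := Q) (motive_3 := fun p => P p.2) node nil
      (fun p ts hp hts => cons p.1 p.2 ts hp hts) (fun _ _ ht => ht) t
  refine ⟨h, fun l => ?_⟩
  induction l with
  | nil => exact nil
  | cons p l ih => exact cons p.1 p.2 l (h p.2) ih

section Invariance

/-- The isomorphism class of the oriented tree represented by `t`. -/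
def toIso (t : OTree) : OTreeIso := Quot.mk Rel t

theorem toIso_eq_of_rel {t t' : OTree} (h : Rel t t') : t.toIso = t'.toIso := Quot.sound h

theorem EquivP.refl (t : OTree) : EquivP t t := by
  refine (induction_forest (P := fun t => EquivP t t)
    (Q := fun l => List.Forall₂ EquivP (l.map Prod.snd) (l.map Prod.snd)) ?_ ?_ ?_).1 t
  · exact fun l h => .node rfl h (List.Perm.refl l)
  · exact .nil
  · exact fun b t ts ht hts => .cons ht hts

theorem EquivP.of_perm {l l' : List (Bool × OTree)} (h : l.Perm l') :
    EquivP (.node l) (.node l') :=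
  .node rfl (List.forall₂_same.2 fun t _ => .refl t) h

theorem EquivP.cons (b : Bool) {t t' : OTree} {l l' : List (Bool × OTree)} (ht : EquivP t t')
    (hl : EquivP (.node l) (.node l')) :
    EquivP (.node ((b, t) :: l)) (.node ((b, t') :: l')) := by
  cases hl with
  | @node _ l₂ _ h₁ h₂ h₃ =>
    exact .node (l₂ := (b, t') :: l₂) (by simp [h₁]) (.cons ht h₂) (h₃.cons _)

variable {M : Type*} [AddCommMonoid M]

theorem sumCuts_cutsL_perm {l l' : List (Bool × OTree)} (h : l.Perm l')
    (F : Bool → OTree → List (Bool × OTree) → M)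
    (hF : ∀ b A l l', l.Perm l' → F b A l = F b A l') :
    sumCuts (cutsL l) F = sumCuts (cutsL l') F := by
  induction h generalizing F with
  | nil => rfl
  | @cons p l l' h ih =>
    obtain ⟨b, t⟩ := p
    rw [sumCuts_cutsL_cons, sumCuts_cutsL_cons, hF b t _ _ h,
      ih _ fun c A _ _ h => hF c A _ _ (h.cons _)]
    congr 3
    funext c A B
    exact hF c A _ _ (h.cons _)
  | swap p q l =>
    obtain ⟨b, t⟩ := p
    obtain ⟨c, u⟩ := q
    simp only [sumCuts_cutsL_cons]
    rw [show (fun d A B => F d A ((c, u) :: (b, B) :: l)) = fun d A B => F d A ((b, B) :: (c, u) :: l)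
        from by funext d A B; exact hF d A _ _ (.swap _ _ _),
      show (fun d A B => F d A ((c, B) :: (b, t) :: l)) = fun d A B => F d A ((b, t) :: (c, B) :: l)
        from by funext d A B; exact hF d A _ _ (.swap _ _ _),
      show (fun d A B => F d A ((c, u) :: (b, t) :: B)) = fun d A B => F d A ((b, t) :: (c, u) :: B)
        from by funext d A B; exact hF d A _ _ (.swap _ _ _)]
    abel
  | trans _ _ ih₁ ih₂ => rw [ih₁ F hF, ih₂ F hF]

theorem sumCuts_cuts_of_equivP {t t' : OTree} (h : EquivP t t') (F : Bool → OTree → OTree → M)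
    (hF : ∀ b A A' B B', EquivP A A' → EquivP B B' → F b A B = F b A' B') :
    sumCuts (cuts t) F = sumCuts (cuts t') F := by
  refine (induction_forest
    (P := fun t => ∀ t', EquivP t t' → ∀ F : Bool → OTree → OTree → M,
      (∀ b A A' B B', EquivP A A' → EquivP B B' → F b A B = F b A' B') →
      sumCuts (cuts t) F = sumCuts (cuts t') F)
    (Q := fun l => ∀ l' : List (Bool × OTree), l.map Prod.fst = l'.map Prod.fst →
      List.Forall₂ EquivP (l.map Prod.snd) (l'.map Prod.snd) →
      ∀ F : Bool → OTree → List (Bool × OTree) → M,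
      (∀ b A A' l l', EquivP A A' → EquivP (.node l) (.node l') → F b A l = F b A' l') →
      sumCuts (cutsL l) F = sumCuts (cutsL l') F) ?_ ?_ ?_).1 t t' h F hF
  · intro l ih t' h F hF
    cases h with
    | @node _ l₂ l' h₁ h₂ h₃ =>
      rw [sumCuts_cuts_node, sumCuts_cuts_node, ih l₂ h₁ h₂ _ fun b A A' l l' hA hl =>
        hF b A A' _ _ hA hl]
      exact sumCuts_cutsL_perm h₃ _ fun b A l l' h =>
        hF b A A _ _ (.refl A) (.of_perm h)
  · intro l' h₁ _ F _
    obtain rfl : l' = [] := by simpa using h₁.symm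
    rfl
  · intro b t ts iht ihts l' h₁ h₂ F hF
    cases l' with
    | nil => simp at h₁
    | cons p ts' =>
      obtain ⟨b', t'⟩ := p
      simp only [List.map_cons, List.cons.injEq, List.forall₂_cons] at h₁ h₂
      obtain ⟨rfl, h₁⟩ := h₁
      obtain ⟨ht, h₂⟩ := h₂
      have hts : EquivP (.node ts) (.node ts') := .node h₁ h₂ (.refl _)
      rw [sumCuts_cutsL_cons, sumCuts_cutsL_cons, hF b _ _ _ _ ht hts,
        iht t' ht _ fun c A A' B B' hA hB => hF c A A' _ _ hA (.cons b hB (.refl _)),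
        ihts ts' h₁ h₂ _ fun c A A' B B' hA hB => hF c A A' _ _ hA (.cons b (.refl _) hB),
        show (fun c A B => F c A ((b, B) :: ts)) = fun c A B => F c A ((b, B) :: ts')
          from by funext c A B; exact hF c A A _ _ (.refl A) (.cons b (.refl B) hts),
        show (fun c A B => F c A ((b, t) :: B)) = fun c A B => F c A ((b, t') :: B)
          from by funext c A B; exact hF c A A _ _ (.refl A) (.cons b ht (.refl _))]

/-- A sum over cuts of a function of isomorphism classes which does not see which side of
the cut contains the root is an isomorphism invariant. -/
theorem sumCuts_cuts_of_rel {t t' : OTree} (h : Rel t t')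
    (F : Bool → OTreeIso → OTreeIso → M) (hF : ∀ b A B, F (!b) B A = F b A B) :
    (sumCuts (cuts t) fun b A B => F b A.toIso B.toIso) =
      sumCuts (cuts t') fun b A B => F b A.toIso B.toIso := by
  cases h with
  | perm h =>
    refine sumCuts_cuts_of_equivP h _ fun b A A' B B' hA hB => ?_
    rw [toIso_eq_of_rel (.perm hA), toIso_eq_of_rel (.perm hB)]
  | @reroot b ls ts =>
    simp only [sumCuts_cuts_node, sumCuts_cutsL_cons, sumCuts_cutsL_append, sumCuts_cutsL_nil,
      toIso_eq_of_rel Rel.reroot, List.append_nil, add_zero]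
    rw [hF]
    abel

end Invariance

section DoubleCuts

variable {α M : Type*} [AddCommGroup M]

/-- The sum of `G` over the ordered pairs of cut edges neither of which is an ancestor of the
other: all iterated cuts of the root component, minus the nested ones. -/
def sumCuts₂ (cut : α → List (Bool × OTree × α)) (x : α)
    (G : Bool → Bool → OTree → OTree → α → M) : M :=
  (sumCuts (cut x) fun b A B => sumCuts (cut B) fun c C D => G b c A C D) -
    sumCuts (cut x) fun b A B => sumCuts (cuts A) fun c C D => G c b C D B

theorem sumCuts₂_cuts_node (l : List (Bool × OTree)) (G : Bool → Bool → OTree → OTree → OTree → M) :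
    sumCuts₂ cuts (.node l) G = sumCuts₂ cutsL l fun b c A C D => G b c A C (.node D) := by
  simp only [sumCuts₂, sumCuts_cuts_node]

theorem sumCuts₂_cutsL_cons (b : Bool) (t : OTree) (ts : List (Bool × OTree))
    (G : Bool → Bool → OTree → OTree → List (Bool × OTree) → M) :
    sumCuts₂ cutsL ((b, t) :: ts) G =
      (sumCuts₂ cuts t fun c d A C D => G c d A C ((b, D) :: ts)) +
      (sumCuts₂ cutsL ts fun c d A C D => G c d A C ((b, t) :: D)) +
      ((sumCuts (cutsL ts) fun c C D => G b c t C D) +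
        sumCuts (cutsL ts) fun c C D => G c b C t D) +
      ((sumCuts (cuts t) fun c A B => sumCuts (cutsL ts) fun d C D => G c d A C ((b, B) :: D)) +
        sumCuts (cuts t) fun c A B => sumCuts (cutsL ts) fun d C D =>
          G d c C A ((b, B) :: D)) := by
  rw [sumCuts_comm (cuts t) (cutsL ts) fun c A B d C D => G d c C A ((b, B) :: D)]
  simp only [sumCuts₂, sumCuts_cutsL_cons, sumCuts_add]
  abel

theorem sumCuts₂_swap :
    (∀ (t : OTree) (G : Bool → Bool → OTree → OTree → OTree → M),
      sumCuts₂ cuts t G = sumCuts₂ cuts t fun b c A C D => G c b C A D) ∧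
    ∀ (l : List (Bool × OTree)) (G : Bool → Bool → OTree → OTree → List (Bool × OTree) → M),
      sumCuts₂ cutsL l G = sumCuts₂ cutsL l fun b c A C D => G c b C A D := by
  refine induction_forest ?_ ?_ ?_
  · intro l ih G
    rw [sumCuts₂_cuts_node, sumCuts₂_cuts_node, ih]
  · intro G
    simp [sumCuts₂]
  · intro b t ts iht ihts G
    rw [sumCuts₂_cutsL_cons, sumCuts₂_cutsL_cons, iht, ihts]
    abel

end DoubleCuts

end OTree

open OTree

section Cobracket

variable {k} {g : Type*} [AddCommGroup g] [Module k g]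

variable (k) in
/-- The contribution to the cobracket of a cut with orientation `b` whose component away from
the root is represented by `x` and whose root component is represented by `y`. -/
def cutTerm (b : Bool) (x y : g) : g ⊗[k] g :=
  if b then y ⊗ₜ x - x ⊗ₜ y else x ⊗ₜ y - y ⊗ₜ x

variable (k) in
theorem cutTerm_not (b : Bool) (x y : g) : cutTerm k (!b) y x = cutTerm k b x y := by
  cases b <;> rfl

variable (k) in
theorem cutTerm_eq_smul (b : Bool) (x y : g) :
    cutTerm k b x y = (if b then 1 else -1 : k) • (y ⊗ₜ[k] x - x ⊗ₜ[k] y) := by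
  cases b <;> simp [cutTerm]

variable (k) in
theorem tau2_cutTerm (b : Bool) (x y : g) : tau2 k g (cutTerm k b x y) = -cutTerm k b x y := by
  cases b <;> simp [cutTerm, tau2]

variable (k g) in
/-- The sum of the cyclic permutations of a triple tensor. -/
def cyclicSum : (g ⊗[k] g) ⊗[k] g →ₗ[k] g ⊗[k] (g ⊗[k] g) :=
  (LinearMap.id + tau123 k g + tau132 k g) ∘ₗ (TensorProduct.assoc k g g g).toLinearMap

variable (k) in
theorem cyclicSum_rotate (x y z : g) :
    cyclicSum k g ((x ⊗ₜ y) ⊗ₜ z) = cyclicSum k g ((y ⊗ₜ z) ⊗ₜ x) := by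
  simp only [cyclicSum, tau123, tau132, LinearMap.comp_apply, LinearMap.add_apply,
    LinearMap.id_apply, LinearEquiv.coe_coe, TensorProduct.assoc_tmul, TensorProduct.comm_tmul]
  abel

/-- The summand of the iterated cobracket at the pairs of cuts one of which is `(b, A, B)`. -/
theorem cyclicSum_rTensor_cutTerm (δ : g →ₗ[k] g ⊗[k] g) (v : OTree → g)
    (hδ : ∀ t, δ (v t) = sumCuts (cuts t) fun b A B => cutTerm k b (v A) (v B))
    (H : Bool → Bool → OTree → OTree → OTree → g ⊗[k] (g ⊗[k] g))
    (hH : ∀ b c A C D, H b c A C D = ((if b then 1 else -1) * (if c then 1 else -1) : k) •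
      cyclicSum k g ((v D ⊗ₜ v C) ⊗ₜ v A)) (b : Bool) (A B : OTree) :
    cyclicSum k g (LinearMap.rTensor g δ (cutTerm k b (v A) (v B))) =
      ((sumCuts (cuts B) fun c C D => H b c A C D) -
        sumCuts (cuts A) fun c C D => H c b C D B) -
      ((sumCuts (cuts B) fun c C D => H c b C A D) -
        sumCuts (cuts A) fun c C D => H b c D C B) := by
  let φ (u : g) : g ⊗[k] g →ₗ[k] g ⊗[k] (g ⊗[k] g) :=
    (if b then 1 else -1 : k) • (cyclicSum k g ∘ₗ (TensorProduct.mk k _ _).flip u)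
  have hφ : cyclicSum k g (LinearMap.rTensor g δ (cutTerm k b (v A) (v B))) =
      φ (v A) (δ (v B)) - φ (v B) (δ (v A)) := by
    simp only [φ, cutTerm_eq_smul, map_smul, map_sub, LinearMap.rTensor_tmul,
      LinearMap.smul_apply, LinearMap.comp_apply, LinearMap.flip_apply,
      TensorProduct.mk_apply, smul_sub]
  rw [hφ, hδ, hδ, map_sumCuts, map_sumCuts, sub_sub_sub_comm, ← sumCuts_sub, ← sumCuts_sub]
  simp only [φ, hH, cutTerm_eq_smul, LinearMap.smul_apply, LinearMap.comp_apply,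
    LinearMap.flip_apply, TensorProduct.mk_apply, map_smul, map_sub, smul_sub, smul_smul]
  congr 2 <;> funext c C D
  · rw [cyclicSum_rotate k (v C) (v D), cyclicSum_rotate k (v D) (v A),
      mul_comm (if c then 1 else -1 : k)]
  · rw [cyclicSum_rotate k (v B) (v D), cyclicSum_rotate k (v B) (v C),
      mul_comm (if c then 1 else -1 : k)]

theorem isLieCobracket_of_apply_eq_sumCuts (δ : g →ₗ[k] g ⊗[k] g) (v : OTree → g)
    (hv : Submodule.span k (Set.range v) = ⊤)
    (hδ : ∀ t, δ (v t) = sumCuts (cuts t) fun b A B => cutTerm k b (v A) (v B)) :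
    IsLieCobracket δ := by
  constructor <;> refine LinearMap.ext_on_range hv fun t => ?_
  · rw [LinearMap.comp_apply, LinearMap.neg_apply, hδ, map_sumCuts,
      ← neg_one_zsmul (sumCuts _ _), ← zsmulAddGroupHom_apply, map_sumCuts]
    simp only [tau2_cutTerm, zsmulAddGroupHom_apply, neg_one_zsmul]
  · change cyclicSum k g (LinearMap.rTensor g δ (δ (v t))) = 0
    let H : Bool → Bool → OTree → OTree → OTree → g ⊗[k] (g ⊗[k] g) :=
      fun b c A C D => ((if b then 1 else -1) * (if c then 1 else -1) : k) •
        cyclicSum k g ((v D ⊗ₜ v C) ⊗ₜ v A)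
    have hH : cyclicSum k g (LinearMap.rTensor g δ (δ (v t))) =
        sumCuts₂ cuts t H - sumCuts₂ cuts t fun b c A C D => H c b C A D := by
      rw [hδ, map_sumCuts, map_sumCuts]
      simp only [cyclicSum_rTensor_cutTerm δ v hδ H fun _ _ _ _ _ => rfl, sumCuts₂, sumCuts_sub]
    rw [hH, ← sumCuts₂_swap.1, sub_self]

end Cobracket

theorem rhoO_otv (t : OTree) :
    rhoO k (otv k t) = sumCuts (cuts t) fun b A B => cutTerm k b (otv k A) (otv k B) := by
  let F (b : Bool) (A B : OTreeIso) : Tor k ⊗[k] Tor k :=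
    cutTerm k b (Finsupp.single A 1) (Finsupp.single B 1)
  have hF {t t' : OTree} (h : t.toIso = t'.toIso) :
      (sumCuts (cuts t) fun b A B => F b A.toIso B.toIso) =
        sumCuts (cuts t') fun b A B => F b A.toIso B.toIso :=
    congrArg (Quot.lift (fun t => sumCuts (cuts t) fun b A B => F b A.toIso B.toIso)
      fun _ _ h => sumCuts_cuts_of_rel h F fun b _ _ => cutTerm_not k b _ _) h
  refine Eq.trans ?_ (hF (Quot.out_eq t.toIso))
  have lift_single (f : OTreeIso → Tor k ⊗[k] Tor k) (q : OTreeIso) :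
      Finsupp.lift (Tor k ⊗[k] Tor k) k OTreeIso f (Finsupp.single q 1) = f q := by
    rw [Finsupp.lift_apply, Finsupp.sum_single_index, one_smul]
    exact zero_smul k _
  refine (lift_single _ t.toIso).trans ?_
  refine congrArg List.sum (List.map_congr_left fun p _ => ?_)
  obtain ⟨_ | _, A, B⟩ := p <;> rfl

theorem span_range_otv : Submodule.span k (Set.range (otv k)) = ⊤ := by
  have h : Set.range (otv k) = Set.range (Finsupp.basisSingleOne : Module.Basis OTreeIso k _) := by
    rw [Finsupp.coe_basisSingleOne]
    exact Quot.mk_surjective.range_comp fun q : OTreeIso => Finsupp.single q (1 : k)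
  rw [h, Module.Basis.span_eq]

/-- `ρ^ss_O` is a Lie cobracket on `T_or`. -/
theorem rhoO_isLieCobracket : IsLieCobracket (rhoO k) :=
  isLieCobracket_of_apply_eq_sumCuts (rhoO k) (otv k) (span_range_otv k) (rhoO_otv k)

end
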